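/- Let G be a 2-degenerate simple graph with maximum degree Δ. Then the strong chromatic index of G satisfies χ'_s(G) ≤ 6Δ − 5. -/

import Mathlib

/-- `G` is `k`-degenerate: every nonempty (induced) subgraph has a vertex of degree at most `k`. -/
def SimpleGraph.Degenerate {V : Type*} (k : ℕ) (G : SimpleGraph V) : Prop :=
  ∀ s : Set V, s.Nonempty → ∃ v ∈ s, (s ∩ {w | G.Adj v w}).ncard ≤ k

/-- Two edges (as unordered pairs) share an endpoint. -/
def Sym2.ShareEndpoint {V : Type*} (e f : Sym2 V) : Prop := ∃ v, v ∈ e ∧ v ∈ f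

/-- Two edges are within distance one: they share an endpoint, or some edge of `G`
shares an endpoint with both. -/
def SimpleGraph.WithinDistOne {V : Type*} (G : SimpleGraph V) (e f : Sym2 V) : Prop :=
  Sym2.ShareEndpoint e f ∨ ∃ g ∈ G.edgeSet, Sym2.ShareEndpoint e g ∧ Sym2.ShareEndpoint g f

/-- `G` admits a strong edge-coloring with `n` colors: distinct edges within distance one
receive different colors. -/
def SimpleGraph.StrongEdgeColorable {V : Type*} (G : SimpleGraph V) (n : ℕ) : Prop :=
  ∃ c : G.edgeSet → Fin n, ∀ e f : G.edgeSet, e ≠ f → G.WithinDistOne e.1 f.1 → c e ≠ c f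

/-- The strong chromatic index of `G`. -/
noncomputable def SimpleGraph.strongChromaticIndex {V : Type*} (G : SimpleGraph V) : ℕ :=
  sInf {n | G.StrongEdgeColorable n}

theorem exists_rank_aux {V : Type*} [Fintype V] [DecidableEq V]
    (G : SimpleGraph V) [DecidableRel G.Adj] (hdeg : G.Degenerate 2) (n : ℕ) :
    ∀ s : Finset V, s.card = n → ∃ r : V → ℕ, (∀ x ∈ s, r x < n) ∧ Set.InjOn r s ∧
      ∀ v ∈ s, (s.filter (fun w => G.Adj v w ∧ r w < r v)).card ≤ 2 := by
  induction n with
  | zero =>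
    intro s hs
    have : s = ∅ := Finset.card_eq_zero.mp hs
    subst this
    exact ⟨fun _ => 0, by simp, by simp, by simp⟩
  | succ n ih =>
    intro s hs
    have hne : s.Nonempty := by
      rw [← Finset.card_pos]; omega
    obtain ⟨v, hv, hc⟩ := hdeg (s : Set V) (by exact_mod_cast hne)
    have hv' : v ∈ s := by exact_mod_cast hv
    have hc' : (s.filter (fun w => G.Adj v w)).card ≤ 2 := by
      rw [← Set.ncard_coe_finset]
      convert hc using 2
      ext w; simp
    obtain ⟨r, hr, hinj, hb⟩ := ih (s.erase v) (by rw [Finset.card_erase_of_mem hv']; omega)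
    refine ⟨Function.update r v n, ?_, ?_, ?_⟩
    · intro x hx
      by_cases hxv : x = v
      · subst hxv; simp
      · rw [Function.update_of_ne hxv]
        have := hr x (Finset.mem_erase.mpr ⟨hxv, hx⟩)
        omega
    · intro x hx y hy hxy
      have hx : x ∈ s := by exact_mod_cast hx
      have hy : y ∈ s := by exact_mod_cast hy
      by_cases hxv : x = v <;> by_cases hyv : y = v
      · rw [hxv, hyv]
      · subst hxv
        rw [Function.update_self, Function.update_of_ne hyv] at hxy
        have := hr y (Finset.mem_erase.mpr ⟨hyv, hy⟩)
        omega
      · subst hyv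
        rw [Function.update_self, Function.update_of_ne hxv] at hxy
        have := hr x (Finset.mem_erase.mpr ⟨hxv, hx⟩)
        omega
      · rw [Function.update_of_ne hxv, Function.update_of_ne hyv] at hxy
        exact hinj (by simp [hx, hxv]) (by simp [hy, hyv]) hxy
    · intro x hx
      by_cases hxv : x = v
      · subst hxv
        refine le_trans (Finset.card_le_card ?_) hc'
        intro w hw
        simp only [Finset.mem_filter] at hw ⊢
        exact ⟨hw.1, hw.2.1⟩
      · refine le_trans (Finset.card_le_card ?_) (hb x (Finset.mem_erase.mpr ⟨hxv, hx⟩))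
        intro w hw
        simp only [Finset.mem_filter, Finset.mem_erase] at hw ⊢
        obtain ⟨hw, ha, hlt⟩ := hw
        have hwv : w ≠ v := by
          rintro rfl
          rw [Function.update_self, Function.update_of_ne hxv] at hlt
          have := hr x (Finset.mem_erase.mpr ⟨hxv, hx⟩)
          omega
        rw [Function.update_of_ne hwv, Function.update_of_ne hxv] at hlt
        exact ⟨⟨hwv, hw⟩, ha, hlt⟩

theorem greedy_aux {E : Type*} [DecidableEq E] (n : ℕ) (hn : 0 < n) (k : E → ℕ)
    (R : E → E → Prop) (hR : ∀ e f, R e f → R f e) (s : Finset E) :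
    (∀ e ∈ s, ∃ t : Finset E, t.card < n ∧ ∀ f ∈ s, f ≠ e → R e f → k f ≤ k e → f ∈ t) →
    ∃ c : E → Fin n, ∀ e ∈ s, ∀ f ∈ s, e ≠ f → R e f → c e ≠ c f := by
  induction s using Finset.induction_on_max_value k with
  | empty => intro _; exact ⟨fun _ => ⟨0, hn⟩, by simp⟩
  | insert a s ha hmax ih =>
    intro h
    obtain ⟨c, hc⟩ := ih (by
      intro e he
      obtain ⟨t, ht, h2⟩ := h e (Finset.mem_insert_of_mem he)
      exact ⟨t, ht, fun f hf => h2 f (Finset.mem_insert_of_mem hf)⟩)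
    obtain ⟨t, ht, h2⟩ := h a (Finset.mem_insert_self _ _)
    have hex : ∃ x : Fin n, x ∉ t.image c := by
      by_contra hcon
      push Not at hcon
      have h3 : (Finset.univ : Finset (Fin n)).card ≤ (t.image c).card :=
        Finset.card_le_card (fun x _ => hcon x)
      have h4 := Finset.card_image_le (s := t) (f := c)
      simp at h3
      omega
    obtain ⟨x, hx⟩ := hex
    have key : ∀ f ∈ s, R a f → c f ≠ x := by
      intro f hf hRf hcf
      apply hx
      refine Finset.mem_image.mpr ⟨f, ?_, hcf⟩
      exact h2 f (Finset.mem_insert_of_mem hf) (by rintro rfl; exact ha hf) hRf (hmax f hf)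
    refine ⟨Function.update c a x, ?_⟩
    intro e he f hf hef hRef
    rcases Finset.mem_insert.mp he with hea | he1
    · rcases Finset.mem_insert.mp hf with hfa | hf1
      · exact absurd (hea.trans hfa.symm) hef
      · subst hea
        rw [Function.update_self, Function.update_of_ne hef.symm]
        exact (key f hf1 hRef).symm
    · have hea : e ≠ a := fun h => ha (h ▸ he1)
      rcases Finset.mem_insert.mp hf with hfa | hf1
      · subst hfa
        rw [Function.update_self, Function.update_of_ne hea]
        exact key e he1 (hR _ _ hRef)
      · have hfa : f ≠ a := fun h => ha (h ▸ hf1)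
        rw [Function.update_of_ne hea, Function.update_of_ne hfa]
        exact hc e he1 f hf1 hef hRef

theorem conflict_aux {V : Type*} [Fintype V] [DecidableEq V]
    (Δ : ℕ) (G : SimpleGraph V) [DecidableRel G.Adj] (hΔ : G.maxDegree = Δ)
    (r : V → ℕ) (hinj : Function.Injective r)
    (hb : ∀ v, (Finset.univ.filter (fun w => G.Adj v w ∧ r w < r v)).card ≤ 2)
    (u v : V) (huv : G.Adj u v) (hlt : r u < r v) :
    ∃ t : Finset (Sym2 V), t.card < 6 * Δ - 5 ∧ ∀ x y, G.Adj x y → s(x, y) ≠ s(u, v) →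
      (x = u ∨ x = v ∨ G.Adj u x ∨ G.Adj v x) → min (r x) (r y) ≤ r u → s(x, y) ∈ t := by
  set bk : V → Finset V := fun v => Finset.univ.filter (fun w => G.Adj v w ∧ r w < r v) with hbk
  set fw : V → Finset V := fun v => Finset.univ.filter (fun w => G.Adj v w ∧ r v < r w) with hfw
  have mbk : ∀ a b, b ∈ bk a ↔ G.Adj a b ∧ r b < r a := by intro a b; simp [hbk]
  have mfw : ∀ a b, b ∈ fw a ↔ G.Adj a b ∧ r a < r b := by intro a b; simp [hfw]
  have hdeg : ∀ a, G.degree a ≤ Δ := fun a => hΔ ▸ G.degree_le_maxDegree a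
  have hsum : ∀ a, (bk a).card + (fw a).card ≤ Δ := by
    intro a
    refine le_trans ?_ (hdeg a)
    rw [← Finset.card_union_of_disjoint, ← G.card_neighborFinset_eq_degree]
    · apply Finset.card_le_card
      intro w hw
      rw [Finset.mem_union, mbk, mfw] at hw
      rw [G.mem_neighborFinset]
      tauto
    · rw [Finset.disjoint_left]
      intro w h1 h2
      rw [mbk] at h1; rw [mfw] at h2; omega
  have hinc : ∀ a, (G.incidenceFinset a).card ≤ Δ := by
    intro a; rw [G.card_incidenceFinset_eq_degree]; exact hdeg a
  have hone : ∀ w z, z ∈ bk w → (((bk w).erase z).image (fun y => s(w, y))).card ≤ 1 := by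
    intro w z hz
    refine le_trans Finset.card_image_le ?_
    rw [Finset.card_erase_of_mem hz]
    have : (bk w).card ≤ 2 := hb w
    omega
  have hvu : v ∈ fw u := (mfw _ _).2 ⟨huv, hlt⟩
  have huv' : u ∈ bk v := (mbk _ _).2 ⟨huv.symm, hlt⟩
  have memi : ∀ a b, G.Adj a b → s(a, b) ∈ G.incidenceFinset a := by
    intro a b hab
    rw [G.mem_incidenceFinset]
    exact ⟨hab, by simp⟩
  let A := (bk u).biUnion (fun w => G.incidenceFinset w)
  let B := (G.incidenceFinset u).erase s(u, v)
  let C := ((fw u).erase v).biUnion (fun w => ((bk w).erase u).image (fun y => s(w, y)))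
  let D := ((bk v).erase u).biUnion (fun w => G.incidenceFinset w)
  let F := (fw v).biUnion (fun w => ((bk w).erase v).image (fun y => s(w, y)))
  refine ⟨A ∪ B ∪ C ∪ D ∪ F, ?_, ?_⟩
  · have hA : A.card ≤ (bk u).card * Δ := Finset.card_biUnion_le_card_mul _ _ _ (fun w _ => hinc w)
    have hB : B.card ≤ Δ - 1 := by
      have := hinc u
      rw [Finset.card_erase_of_mem (memi u v huv)]
      omega
    have hC : C.card ≤ ((fw u).erase v).card * 1 := by
      refine Finset.card_biUnion_le_card_mul _ _ _ (fun w hw => hone w u ?_)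
      have := (mfw _ _).1 (Finset.mem_of_mem_erase hw)
      exact (mbk _ _).2 ⟨this.1.symm, this.2⟩
    have hD : D.card ≤ ((bk v).erase u).card * Δ :=
      Finset.card_biUnion_le_card_mul _ _ _ (fun w _ => hinc w)
    have hF : F.card ≤ (fw v).card * 1 := by
      refine Finset.card_biUnion_le_card_mul _ _ _ (fun w hw => hone w v ?_)
      have := (mfw _ _).1 hw
      exact (mbk _ _).2 ⟨this.1.symm, this.2⟩
    rw [Finset.card_erase_of_mem hvu] at hC
    rw [Finset.card_erase_of_mem huv'] at hD
    have p1 : 0 < (fw u).card := Finset.card_pos.mpr ⟨v, hvu⟩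
    have p2 : 0 < (bk v).card := Finset.card_pos.mpr ⟨u, huv'⟩
    have s1 := hsum u
    have s2 := hsum v
    have b1 : (bk u).card ≤ 2 := hb u
    have b2 : (bk v).card ≤ 2 := hb v
    have hU : (A ∪ B ∪ C ∪ D ∪ F).card ≤ A.card + B.card + C.card + D.card + F.card := by
      have h1 := Finset.card_union_le (A ∪ B ∪ C ∪ D) F
      have h2 := Finset.card_union_le (A ∪ B ∪ C) D
      have h3 := Finset.card_union_le (A ∪ B) C
      have h4 := Finset.card_union_le A B
      omega
    generalize (bk u).card = a at *
    generalize (bk v).card = b at *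
    interval_cases a <;> interval_cases b <;> omega
  · intro x y hxy hne hx hmin
    simp only [Finset.mem_union]
    have hB : ∀ z, G.Adj u z → s(u, z) ≠ s(u, v) → s(u, z) ∈ B :=
      fun z hz hn => Finset.mem_erase.mpr ⟨hn, memi u z hz⟩
    have hswap : s(x, y) = s(y, x) := Sym2.eq_swap
    by_cases hxu : x = u
    · subst hxu
      exact Or.inl (Or.inl (Or.inl (Or.inr (hB y hxy hne))))
    by_cases hyu : y = u
    · subst hyu
      rw [hswap] at hne ⊢
      exact Or.inl (Or.inl (Or.inl (Or.inr (hB x hxy.symm hne))))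
    have hyltx : r u < r x → r y < r x := by
      intro h
      rcases min_le_iff.mp hmin with h' | h' <;> omega
    have hDmem : ∀ w z, w ∈ bk v → w ≠ u → G.Adj w z → s(w, z) ∈ D := by
      intro w z hw hwu hwz
      exact Finset.mem_biUnion.mpr ⟨w, Finset.mem_erase.mpr ⟨hwu, hw⟩, memi w z hwz⟩
    by_cases hxv : x = v
    · subst hxv
      have hy : y ∈ bk x := (mbk _ _).2 ⟨hxy, hyltx hlt⟩
      rw [hswap]
      exact Or.inl (Or.inr (hDmem y x hy hyu hxy.symm))
    rcases hx with hx | hx | hx | hx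
    · exact absurd hx hxu
    · exact absurd hx hxv
    · rcases lt_or_gt_of_ne (fun h => hxu (hinj h)) with h | h
      · exact Or.inl (Or.inl (Or.inl (Or.inl
          (Finset.mem_biUnion.mpr ⟨x, (mbk _ _).2 ⟨hx, h⟩, memi x y hxy⟩))))
      · refine Or.inl (Or.inl (Or.inr (Finset.mem_biUnion.mpr
          ⟨x, Finset.mem_erase.mpr ⟨hxv, (mfw _ _).2 ⟨hx, h⟩⟩, Finset.mem_image.mpr
          ⟨y, Finset.mem_erase.mpr ⟨hyu, (mbk _ _).2 ⟨hxy, hyltx h⟩⟩, rfl⟩⟩)))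
    · rcases lt_or_gt_of_ne (fun h => hxv (hinj h)) with h | h
      · exact Or.inl (Or.inr (hDmem x y ((mbk _ _).2 ⟨hx, h⟩) hxu hxy))
      · have hux : r u < r x := by omega
        have hyv : y ≠ v := by
          rintro rfl
          rcases min_le_iff.mp hmin with h' | h' <;> omega
        exact Or.inr (Finset.mem_biUnion.mpr
          ⟨x, (mfw _ _).2 ⟨hx, h⟩, Finset.mem_image.mpr
          ⟨y, Finset.mem_erase.mpr ⟨hyv, (mbk _ _).2 ⟨hxy, hyltx hux⟩⟩, rfl⟩⟩)

theorem within_aux {V : Type*} (G : SimpleGraph V) (u v : V) (f : Sym2 V)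
    (h : G.WithinDistOne s(u, v) f) :
    ∃ x ∈ f, x = u ∨ x = v ∨ G.Adj u x ∨ G.Adj v x := by
  rcases h with ⟨x, hx, hxf⟩ | ⟨g, hg, ⟨a, ha, hag⟩, ⟨b, hbg, hbf⟩⟩
  · refine ⟨x, hxf, ?_⟩
    rw [Sym2.mem_iff] at hx
    tauto
  · refine ⟨b, hbf, ?_⟩
    rw [Sym2.mem_iff] at ha
    by_cases hab : a = b
    · subst hab; tauto
    · have : g = s(a, b) := (Sym2.mem_and_mem_iff hab).mp ⟨hag, hbg⟩
      subst this
      rw [SimpleGraph.mem_edgeSet] at hg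
      rcases ha with rfl | rfl <;> tauto

/-- The strong chromatic index of a `2`-degenerate graph with maximum degree `Δ`
is at most `6Δ - 5`. -/
theorem strongChromaticIndex_le_of_two_degenerate {V : Type*} [Fintype V] [DecidableEq V]
    (Δ : ℕ) (G : SimpleGraph V) [DecidableRel G.Adj]
    (hdeg : G.Degenerate 2) (hΔ : G.maxDegree = Δ) :
    G.strongChromaticIndex ≤ 6 * Δ - 5 := by
  apply Nat.sInf_le
  show G.StrongEdgeColorable (6 * Δ - 5)
  by_cases hemp : ∀ e : G.edgeSet, False
  · exact ⟨fun e => (hemp e).elim, fun e => (hemp e).elim⟩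
  have hpos : 0 < 6 * Δ - 5 := by
    push Not at hemp
    obtain ⟨⟨e, he⟩, -⟩ := hemp
    induction e using Sym2.ind with
    | _ a b =>
      have h1 : 0 < G.degree a := (G.degree_pos_iff_exists_adj a).mpr ⟨b, he⟩
      have h2 := G.degree_le_maxDegree a
      omega
  obtain ⟨r, -, hinj, hb⟩ := exists_rank_aux G hdeg _ Finset.univ rfl
  have hinj : Function.Injective r := by simpa using hinj
  have hb : ∀ v, (Finset.univ.filter (fun w => G.Adj v w ∧ r w < r v)).card ≤ 2 :=
    fun v => hb v (Finset.mem_univ v)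
  let k : Sym2 V → ℕ := Sym2.lift ⟨fun x y => min (r x) (r y), fun x y => min_comm _ _⟩
  have hk : ∀ x y, k s(x, y) = min (r x) (r y) := fun x y => rfl
  have hR : ∀ e f, G.WithinDistOne e f → G.WithinDistOne f e := by
    rintro e f (⟨x, h1, h2⟩ | ⟨g, hg, ⟨a, h1, h2⟩, ⟨b, h3, h4⟩⟩)
    · exact Or.inl ⟨x, h2, h1⟩
    · exact Or.inr ⟨g, hg, ⟨b, h4, h3⟩, ⟨a, h2, h1⟩⟩
  have main : ∀ u v, G.Adj u v → r u < r v → ∃ t : Finset (Sym2 V), t.card < 6 * Δ - 5 ∧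
      ∀ f ∈ G.edgeFinset, f ≠ s(u, v) → G.WithinDistOne s(u, v) f → k f ≤ k s(u, v) → f ∈ t := by
    intro u v huv hlt
    obtain ⟨t, ht, h2⟩ := conflict_aux Δ G hΔ r hinj hb u v huv hlt
    refine ⟨t, ht, ?_⟩
    intro f hf hne hw hkf
    obtain ⟨x, hxf, hx⟩ := within_aux G u v f hw
    obtain ⟨y, rfl⟩ := Sym2.mem_iff_exists.mp hxf
    rw [SimpleGraph.mem_edgeFinset, SimpleGraph.mem_edgeSet] at hf
    rw [hk, hk, min_eq_left hlt.le] at hkf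
    exact h2 x y hf hne hx hkf
  obtain ⟨c, hc⟩ := greedy_aux (6 * Δ - 5) hpos k G.WithinDistOne hR G.edgeFinset (by
    intro e he
    induction e using Sym2.ind with
    | _ a b =>
      rw [SimpleGraph.mem_edgeFinset, SimpleGraph.mem_edgeSet] at he
      rcases lt_or_gt_of_ne (fun h => he.ne (hinj h)) with h | h
      · exact main a b he h
      · rw [Sym2.eq_swap]
        exact main b a he.symm h)
  refine ⟨fun e => c e.1, ?_⟩
  intro e f hef hw
  exact hc e.1 (SimpleGraph.mem_edgeFinset.mpr e.2) f.1 (SimpleGraph.mem_edgeFinset.mpr f.2)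
    (fun h => hef (Subtype.ext h)) hw
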